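/- arXiv:1503.06732 — 2 statements merged into one kernel-verified Lean document; each statement's English description precedes it below -/
import Mathlib

section
/- Let η₀ > 0 and let g : [0, η₀] → ℝ be three times continuously differentiable, satisfy the ODE 4g(η) − η⁴g(η) − 4ηg'(η) − 4η²g(η)g'(η) + 8η²g''(η) + 4η³g'''(η) = 0 on [0, η₀], with g(0) = 0, g''(0) = 0 and g'(0) > 0. Then it is impossible that g'(η) > 0 for all η ∈ (0, η₀) and g'(η₀) = 0; i.e., g' has no first zero in (0, η₀]. -/
/-!
Write `g = f'` for the radial profile `f`, so that `Δf = g' + g/η`, and let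
`Q = η (Δf)' = η g'' + g' - g/η`. For `η > 0` the ODE is equivalent to `Q' = η² g / 4 + g g'`, and
`Q → 0` at the origin. As long as `g' > 0`, also `g > 0`, hence `Q' > 0` and `Q > 0`. At a first
zero `c` of `g'` this reads `c g''(c) > g(c)/c > 0`, although `g'` is positive just before it
vanishes at `c`, so `g''(c) ≤ 0`.
-/

open Set Filter Topology

theorem nonpos_of_isLocalMinOn_Iic {f : ℝ → ℝ} {f' a : ℝ} (hmin : IsLocalMinOn f (Iic a) a)
    (hf : HasDerivWithinAt f f' (Iic a) a) : f' ≤ 0 := by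
  have hcone : (-1 : ℝ) ∈ posTangentConeAt (Iic a) a :=
    mem_posTangentConeAt_of_segment_subset <|
      (convex_Iic a).segment_subset self_mem_Iic (by simp)
  simpa using hmin.hasFDerivWithinAt_nonneg hf.hasFDerivWithinAt hcone

theorem lt_of_tendsto_of_hasDerivAt_pos {f f' : ℝ → ℝ} {a b l m : ℝ} (hab : a < b)
    (hf : ∀ x ∈ Ioo a b, HasDerivAt f (f' x) x) (hf' : ∀ x ∈ Ioo a b, 0 < f' x)
    (ha : Tendsto f (𝓝[>] a) (𝓝 l)) (hb : Tendsto f (𝓝[<] b) (𝓝 m)) : l < m := by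
  obtain ⟨c, hc, hslope⟩ : ∃ c ∈ Ioo a b, (b - a) * f' c = (m - l) * 1 :=
    exists_ratio_hasDerivAt_eq_ratio_slope' f f' hab id 1 hf (fun x _ ↦ hasDerivAt_id x)
      ha (tendsto_id.mono_left nhdsWithin_le_nhds) hb (tendsto_id.mono_left nhdsWithin_le_nhds)
  have : 0 < (b - a) * f' c := mul_pos (sub_pos.2 hab) (hf' c hc)
  linarith

theorem forall_Icc_lt_of_forall_Ico_lt {α β : Type*} [ConditionallyCompleteLinearOrder α]
    [TopologicalSpace α] [OrderTopology α] [LinearOrder β] [TopologicalSpace β]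
    [ClosedIicTopology β] {f : α → β} {a b : α} {m : β} (hf : ContinuousOn f (Icc a b))
    (ha : m < f a) (hstep : ∀ c ∈ Ioc a b, (∀ x ∈ Ico a c, m < f x) → m < f c) :
    ∀ x ∈ Icc a b, m < f x := by
  by_contra! ⟨x, hx, hfx⟩
  have hcompact : IsCompact (Icc a b ∩ f ⁻¹' Iic m) :=
    isCompact_Icc.of_isClosed_subset (hf.preimage_isClosed_of_isClosed isClosed_Icc isClosed_Iic)
      inter_subset_left
  obtain ⟨c, ⟨hc, hfc⟩, hleast⟩ := hcompact.exists_isLeast ⟨x, hx, hfx⟩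
  have hac : a < c := hc.1.lt_of_ne fun h ↦ (h ▸ ha).not_ge hfc
  refine (hstep c ⟨hac, hc.2⟩ fun y hy ↦ ?_).not_ge hfc
  by_contra! hfy
  exact hy.2.not_ge (hleast ⟨⟨hy.1, hy.2.le.trans hc.2⟩, hfy⟩)

/-- The quantity `η (Δf)'(η)` for a radial function `f` on the plane with `f' = g`, where `g'` and
`g''` stand for the derivatives of `g`. At `η = 0` the division gives the junk value `g' 0`, so the
behaviour at the origin is expressed by limits. -/
noncomputable def radialFlux (g g' g'' : ℝ → ℝ) (η : ℝ) : ℝ :=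
  η * g'' η + g' η - g η / η

section RadialFlux

variable {g g' g'' : ℝ → ℝ}

theorem continuousWithinAt_radialFlux {s : Set ℝ} {η : ℝ} (hη : η ≠ 0)
    (hg : ContinuousWithinAt g s η) (hg' : ContinuousWithinAt g' s η)
    (hg'' : ContinuousWithinAt g'' s η) : ContinuousWithinAt (radialFlux g g' g'') s η :=
  ((continuousWithinAt_id.mul hg'').add hg').sub (hg.div continuousWithinAt_id hη)

theorem hasDerivAt_radialFlux {η d : ℝ} (hη : η ≠ 0) (hg : HasDerivAt g (g' η) η)
    (hg' : HasDerivAt g' (g'' η) η) (hg'' : HasDerivAt g'' d η) :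
    HasDerivAt (radialFlux g g' g'') (η * d + 2 * g'' η - g' η / η + g η / η ^ 2) η := by
  refine ((((hasDerivAt_id η).mul hg'').add hg').sub (hg.div (hasDerivAt_id η) hη)).congr_deriv ?_
  rw [id]
  field_simp
  ring

theorem tendsto_radialFlux_zero (h0 : g 0 = 0) (hg : HasDerivWithinAt g (g' 0) (Ioi 0) 0)
    (hg' : ContinuousWithinAt g' (Ioi 0) 0) (hg'' : ContinuousWithinAt g'' (Ioi 0) 0) :
    Tendsto (radialFlux g g' g'') (𝓝[>] 0) (𝓝 0) := by
  have hquot : Tendsto (fun η ↦ g η / η) (𝓝[>] 0) (𝓝 (g' 0)) :=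
    ((hasDerivWithinAt_iff_tendsto_slope' self_notMem_Ioi).1 hg).congr fun η ↦ by
      simp [slope_def_field, h0]
  have hprod : Tendsto (fun η ↦ η * g'' η) (𝓝[>] 0) (𝓝 (0 * g'' 0)) :=
    (tendsto_id.mono_left nhdsWithin_le_nhds).mul hg''.tendsto
  simpa only [zero_mul, zero_add, sub_self] using! (hprod.add hg'.tendsto).sub hquot

theorem radialFlux_pos {q : ℝ → ℝ} {b : ℝ} (hb : 0 < b)
    (hg : ∀ η ∈ Icc 0 b, HasDerivWithinAt g (g' η) (Icc 0 b) η)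
    (hg' : ContinuousOn g' (Icc 0 b)) (hg'' : ContinuousOn g'' (Icc 0 b)) (h0 : g 0 = 0)
    (hflux : ∀ η ∈ Ioo 0 b, HasDerivAt (radialFlux g g' g'') (q η) η)
    (hq : ∀ η ∈ Ioo 0 b, 0 < q η) : 0 < radialFlux g g' g'' b := by
  have h0mem : (0 : ℝ) ∈ Icc 0 b := left_mem_Icc.2 hb.le
  have hbmem : b ∈ Icc 0 b := right_mem_Icc.2 hb.le
  have hright : Icc 0 b ∈ 𝓝[>] 0 := Icc_mem_nhdsGT hb
  have hleft : Icc 0 b ∈ 𝓝[<] b := Icc_mem_nhdsLT hb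
  have hzero : Tendsto (radialFlux g g' g'') (𝓝[>] 0) (𝓝 0) :=
    tendsto_radialFlux_zero h0 ((hg 0 h0mem).mono_of_mem_nhdsWithin hright)
      ((hg' 0 h0mem).mono_of_mem_nhdsWithin hright) ((hg'' 0 h0mem).mono_of_mem_nhdsWithin hright)
  have hend : ContinuousWithinAt (radialFlux g g' g'') (Iio b) b :=
    continuousWithinAt_radialFlux hb.ne'
      ((hg b hbmem).continuousWithinAt.mono_of_mem_nhdsWithin hleft)
      ((hg' b hbmem).mono_of_mem_nhdsWithin hleft) ((hg'' b hbmem).mono_of_mem_nhdsWithin hleft)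
  exact lt_of_tendsto_of_hasDerivAt_pos hb hflux hq hzero hend

theorem deriv_pos_of_radialFlux_pos {b : ℝ} (hb : 0 < b) (hgb : 0 < g b)
    (hflux : 0 < radialFlux g g' g'' b) (hg' : HasDerivWithinAt g' (g'' b) (Iic b) b)
    (hpos : ∀ᶠ η in 𝓝[<] b, 0 < g' η) : 0 < g' b := by
  by_contra! hnonpos
  have hmin : IsLocalMinOn g' (Iic b) b := by
    rw [IsLocalMinOn, IsMinFilter, ← Iio_insert, nhdsWithin_insert, eventually_sup]
    exact ⟨by simp, hpos.mono fun η hη ↦ hnonpos.trans hη.le⟩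
  have hsecond : b * g'' b ≤ 0 :=
    mul_nonpos_of_nonneg_of_nonpos hb.le (nonpos_of_isLocalMinOn_Iic hmin hg')
  have hquot : 0 < g b / b := div_pos hgb hb
  rw [radialFlux] at hflux
  linarith

end RadialFlux

section SelfSimilar

variable {g g' g'' g''' : ℝ → ℝ}

theorem hasDerivAt_radialFlux_of_ode {η : ℝ} (hη : η ≠ 0) (hg : HasDerivAt g (g' η) η)
    (hg' : HasDerivAt g' (g'' η) η) (hg'' : HasDerivAt g'' (g''' η) η)
    (hode : 4 * g η - η ^ 4 * g η - 4 * η * g' η - 4 * η ^ 2 * g η * g' η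
      + 8 * η ^ 2 * g'' η + 4 * η ^ 3 * g''' η = 0) :
    HasDerivAt (radialFlux g g' g'') (η ^ 2 * g η / 4 + g η * g' η) η := by
  convert hasDerivAt_radialFlux hη hg hg' hg'' using 1
  field_simp
  linarith

theorem deriv_pos_right_of_ode {b : ℝ} (hb : 0 < b)
    (hg : ∀ η ∈ Icc 0 b, HasDerivWithinAt g (g' η) (Icc 0 b) η)
    (hg' : ∀ η ∈ Icc 0 b, HasDerivWithinAt g' (g'' η) (Icc 0 b) η)
    (hg'' : ContinuousOn g'' (Icc 0 b))
    (hg''' : ∀ η ∈ Ioo 0 b, HasDerivAt g'' (g''' η) η)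
    (hode : ∀ η ∈ Ioo 0 b,
      4 * g η - η ^ 4 * g η - 4 * η * g' η - 4 * η ^ 2 * g η * g' η
        + 8 * η ^ 2 * g'' η + 4 * η ^ 3 * g''' η = 0)
    (h0 : g 0 = 0) (hpos : ∀ η ∈ Ioo 0 b, 0 < g' η) : 0 < g' b := by
  have hmono : StrictMonoOn g (Icc 0 b) :=
    strictMonoOn_of_hasDerivWithinAt_pos (f' := g') (convex_Icc 0 b)
      (HasDerivWithinAt.continuousOn hg)
      (fun η hη ↦ (hg η (interior_subset hη)).mono interior_subset)
      (by rwa [interior_Icc])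
  have hgpos : ∀ η ∈ Ioc 0 b, 0 < g η := fun η hη ↦
    h0 ▸ hmono (left_mem_Icc.2 hb.le) (Ioc_subset_Icc_self hη) hη.1
  have hflux : ∀ η ∈ Ioo 0 b,
      HasDerivAt (radialFlux g g' g'') (η ^ 2 * g η / 4 + g η * g' η) η := fun η hη ↦
    have hnhds : Icc 0 b ∈ 𝓝 η := Icc_mem_nhds hη.1 hη.2
    have hmem : η ∈ Icc 0 b := Ioo_subset_Icc_self hη
    hasDerivAt_radialFlux_of_ode hη.1.ne' ((hg η hmem).hasDerivAt hnhds)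
      ((hg' η hmem).hasDerivAt hnhds) (hg''' η hη) (hode η hη)
  have hfluxpos : 0 < radialFlux g g' g'' b := by
    refine radialFlux_pos hb hg (HasDerivWithinAt.continuousOn hg') hg'' h0 hflux fun η hη ↦ ?_
    have := hη.1
    have := hgpos η (Ioo_subset_Ioc_self hη)
    have := hpos η hη
    positivity
  exact deriv_pos_of_radialFlux_pos hb (hgpos b (right_mem_Ioc.2 hb)) hfluxpos
    ((hg' b (right_mem_Icc.2 hb.le)).mono_of_mem_nhdsWithin (Icc_mem_nhdsLE hb))
    (mem_of_superset (Ioo_mem_nhdsLT hb) hpos)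

theorem stmt4_general {η₀ : ℝ}
    (hg : ∀ η ∈ Icc 0 η₀, HasDerivWithinAt g (g' η) (Icc 0 η₀) η)
    (hg' : ∀ η ∈ Icc 0 η₀, HasDerivWithinAt g' (g'' η) (Icc 0 η₀) η)
    (hg'' : ContinuousOn g'' (Icc 0 η₀))
    (hg''' : ∀ η ∈ Ioo 0 η₀, HasDerivAt g'' (g''' η) η)
    (hode : ∀ η ∈ Ioo 0 η₀,
      4 * g η - η ^ 4 * g η - 4 * η * g' η - 4 * η ^ 2 * g η * g' η
        + 8 * η ^ 2 * g'' η + 4 * η ^ 3 * g''' η = 0)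
    (h0 : g 0 = 0) (h1 : 0 < g' 0) : ∀ η ∈ Icc 0 η₀, 0 < g' η := by
  refine forall_Icc_lt_of_forall_Ico_lt (HasDerivWithinAt.continuousOn hg') h1 fun c hc hpos ↦ ?_
  have hIcc : Icc 0 c ⊆ Icc 0 η₀ := Icc_subset_Icc_right hc.2
  have hIoo : Ioo 0 c ⊆ Ioo 0 η₀ := Ioo_subset_Ioo_right hc.2
  exact deriv_pos_right_of_ode hc.1 (fun η hη ↦ (hg η (hIcc hη)).mono hIcc)
    (fun η hη ↦ (hg' η (hIcc hη)).mono hIcc) (hg''.mono hIcc) (fun η hη ↦ hg''' η (hIoo hη))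
    (fun η hη ↦ hode η (hIoo hη)) h0 (fun η hη ↦ hpos η (Ioo_subset_Ico_self hη))

end SelfSimilar

/-- Let `η₀ > 0` and let `g : [0, η₀] → ℝ` be `C³`, satisfy the ODE on `[0, η₀]`,
with `g(0) = 0`, `g''(0) = 0` and `g'(0) > 0`. Then it is impossible that `g'(η) > 0` for all
`η ∈ (0, η₀)` and `g'(η₀) = 0`; i.e. `g'` has no first zero in `(0, η₀]`. -/
theorem stmt4 (η₀ : ℝ) (hη₀ : 0 < η₀)
    (g g' g'' g''' : ℝ → ℝ)
    (hg : ∀ η ∈ Set.Icc 0 η₀, HasDerivWithinAt g (g' η) (Set.Icc 0 η₀) η)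
    (hg' : ∀ η ∈ Set.Icc 0 η₀, HasDerivWithinAt g' (g'' η) (Set.Icc 0 η₀) η)
    (hg'' : ∀ η ∈ Set.Icc 0 η₀, HasDerivWithinAt g'' (g''' η) (Set.Icc 0 η₀) η)
    (hg''' : ContinuousOn g''' (Set.Icc 0 η₀))
    (hode : ∀ η ∈ Set.Icc 0 η₀,
      4 * g η - η ^ 4 * g η - 4 * η * g' η - 4 * η ^ 2 * g η * g' η
        + 8 * η ^ 2 * g'' η + 4 * η ^ 3 * g''' η = 0)
    (h0 : g 0 = 0) (h2 : g'' 0 = 0) (h1 : 0 < g' 0) :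
    ¬ ((∀ η ∈ Set.Ioo 0 η₀, 0 < g' η) ∧ g' η₀ = 0) :=
  fun ⟨_, hend⟩ ↦ (stmt4_general hg hg' (HasDerivWithinAt.continuousOn hg'')
    (fun η hη ↦ (hg'' η (Ioo_subset_Icc_self hη)).hasDerivAt (Icc_mem_nhds hη.1 hη.2))
    (fun η hη ↦ hode η (Ioo_subset_Icc_self hη)) h0 h1 η₀ (right_mem_Icc.2 hη₀.le)).ne' hend
end

section
/- Let a, γ ∈ ℝ and let h : [a, ∞) → ℝ be three times continuously differentiable with h'(r) > 0 for all r ≥ a and h''(r) − h'(r) − h(r) ≥ h(r)² + γ for all r ≥ a. Then for all r ≥ a, (1/2)h'(r)² ≥ (1/2)h(r)² + (1/3)h(r)³ + γh(r) + δ, where δ = (1/2)h'(a)² − (1/2)h(a)² − (1/3)h(a)³ − γh(a). -/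
/-!
Since `h' ≥ 0`, dropping `h'` from `h'' - h' - h ≥ h² + γ` leaves `h'' ≥ h + h² + γ`, where the
right-hand side depends on `h` alone and so is `V'(h)` for a cubic `V`. The energy `h'² / 2 - V(h)`
then has derivative `h' (h'' - V'(h)) ≥ 0`.
-/

open Set

section Energy

/-- The energy `h'² / 2 - V(h)` of the motion `h'' = f(h)`, where `V` is a primitive of the force
`f` (so `V` is minus the usual potential energy). The velocity `h'` is a separate argument, so that
it can be a one-sided derivative at an endpoint. -/
noncomputable def energy (V h h' : ℝ → ℝ) (r : ℝ) : ℝ :=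
  (1 / 2) * h' r ^ 2 - V (h r)

variable {V f h h' h'' : ℝ → ℝ} {s : Set ℝ}

theorem hasDerivWithinAt_energy {r : ℝ} (hV : HasDerivAt V (f (h r)) (h r))
    (hh : HasDerivWithinAt h (h' r) s r) (hh' : HasDerivWithinAt h' (h'' r) s r) :
    HasDerivWithinAt (energy V h h') (h' r * (h'' r - f (h r))) s r := by
  have kinetic : HasDerivWithinAt (fun x => (1 / 2) * h' x ^ 2) (h' r * h'' r) s r :=
    ((hh'.fun_pow 2).const_mul (1 / 2)).congr_deriv (by ring)
  exact (kinetic.sub (hV.comp_hasDerivWithinAt r hh)).congr_deriv (by ring)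

theorem monotoneOn_energy (hs : Convex ℝ s)
    (hV : ∀ r ∈ s, HasDerivAt V (f (h r)) (h r))
    (hh : ∀ r ∈ s, HasDerivWithinAt h (h' r) s r)
    (hh' : ∀ r ∈ s, HasDerivWithinAt h' (h'' r) s r)
    (hnonneg : ∀ r ∈ interior s, 0 ≤ h' r)
    (hforce : ∀ r ∈ interior s, f (h r) ≤ h'' r) :
    MonotoneOn (energy V h h') s := by
  have hderiv : ∀ r ∈ s,
      HasDerivWithinAt (energy V h h') (h' r * (h'' r - f (h r))) s r :=
    fun r hr => hasDerivWithinAt_energy (hV r hr) (hh r hr) (hh' r hr)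
  exact monotoneOn_of_hasDerivWithinAt_nonneg hs
    (fun r hr => (hderiv r hr).continuousWithinAt)
    (fun r hr => (hderiv r (interior_subset hr)).mono interior_subset)
    (fun r hr => mul_nonneg (hnonneg r hr) (sub_nonneg.2 (hforce r hr)))

end Energy

/-- The primitive vanishing at `0` of the force `x + x² + γ` of the ODE. -/
noncomputable def cubicPotential (γ x : ℝ) : ℝ :=
  (1 / 2) * x ^ 2 + (1 / 3) * x ^ 3 + γ * x

theorem hasDerivAt_cubicPotential (γ x : ℝ) :
    HasDerivAt (cubicPotential γ) (x + x ^ 2 + γ) x :=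
  ((((hasDerivAt_pow 2 x).const_mul (1 / 2)).add ((hasDerivAt_pow 3 x).const_mul (1 / 3))).add
    (hasDerivAt_const_mul γ)).congr_deriv (by ring)

theorem stmt10_general {s : Set ℝ} (hs : Convex ℝ s) {γ : ℝ} {h h' h'' : ℝ → ℝ}
    (hh : ∀ r ∈ s, HasDerivWithinAt h (h' r) s r)
    (hh' : ∀ r ∈ s, HasDerivWithinAt h' (h'' r) s r)
    (hnonneg : ∀ r ∈ interior s, 0 ≤ h' r)
    (hineq : ∀ r ∈ interior s, h r ^ 2 + γ ≤ h'' r - h' r - h r)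
    {a r : ℝ} (ha : a ∈ s) (hr : r ∈ s) (har : a ≤ r) :
    (1 / 2) * h r ^ 2 + (1 / 3) * h r ^ 3 + γ * h r
        + ((1 / 2) * h' a ^ 2 - (1 / 2) * h a ^ 2 - (1 / 3) * h a ^ 3 - γ * h a)
      ≤ (1 / 2) * h' r ^ 2 := by
  have hforce : ∀ x ∈ interior s, h x + h x ^ 2 + γ ≤ h'' x := fun x hx => by
    linarith [hineq x hx, hnonneg x hx]
  have henergy : energy (cubicPotential γ) h h' a ≤ energy (cubicPotential γ) h h' r :=
    monotoneOn_energy (f := fun x => x + x ^ 2 + γ) hs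
      (fun x _ => hasDerivAt_cubicPotential γ (h x)) hh hh' hnonneg hforce ha hr har
  simp only [energy, cubicPotential] at henergy
  linarith

/-- If `h : [a, ∞) → ℝ` is `C³` with `h' > 0` and
`h'' − h' − h ≥ h² + γ` on `[a, ∞)`, then for all `r ≥ a`,
`(1/2)h'(r)² ≥ (1/2)h(r)² + (1/3)h(r)³ + γh(r) + δ` where
`δ = (1/2)h'(a)² − (1/2)h(a)² − (1/3)h(a)³ − γh(a)`. -/
theorem stmt10 (a γ : ℝ) (h h' h'' h''' : ℝ → ℝ)
    (hh : ∀ r ∈ Set.Ici a, HasDerivWithinAt h (h' r) (Set.Ici a) r)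
    (hh' : ∀ r ∈ Set.Ici a, HasDerivWithinAt h' (h'' r) (Set.Ici a) r)
    (hh'' : ∀ r ∈ Set.Ici a, HasDerivWithinAt h'' (h''' r) (Set.Ici a) r)
    (hh''' : ContinuousOn h''' (Set.Ici a))
    (hpos : ∀ r ∈ Set.Ici a, 0 < h' r)
    (hineq : ∀ r ∈ Set.Ici a, h r ^ 2 + γ ≤ h'' r - h' r - h r) :
    ∀ r ∈ Set.Ici a,
      (1 / 2) * h r ^ 2 + (1 / 3) * h r ^ 3 + γ * h r
          + ((1 / 2) * h' a ^ 2 - (1 / 2) * h a ^ 2 - (1 / 3) * h a ^ 3 - γ * h a)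
        ≤ (1 / 2) * h' r ^ 2 :=
  fun _ hr => stmt10_general (convex_Ici a) hh hh' (fun x hx => (hpos x (interior_subset hx)).le)
    (fun x hx => hineq x (interior_subset hx)) self_mem_Ici hr hr
end
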